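/- Let 𝔽_q be a finite field, l, m positive integers, and suppose (x^l − 1)(y^m − 1) = g(x,y)·h(x,y) in 𝔽_q[x,y], where g has x-degree a and y-degree b with 0 < a < l and 0 < b < m. Let C be the ideal of 𝔎 = 𝔽_q[x,y]/⟨x^l−1, y^m−1⟩ generated by the image of g, and C* the ideal of 𝔎 generated by the image of the reciprocal polynomial h*. Then C ⊆ C* if and only if (x^l − 1)(y^m − 1) divides g(x,y)·g*(x,y) in 𝔽_q[x,y]. -/

import Mathlib

/-!
Taking reciprocals is multiplicative and fixes `P = (x^l − 1)(y^m − 1)`, so `g* h* = P`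
(`recip_mul_recip`). Cancelling `g*`, the condition `P ∣ g g*` becomes `h* ∣ g`, while `C ⊆ C*`
says that `g` lies in `⟨h*, x^l − 1, y^m − 1⟩`. It remains to deduce divisibility from membership
(`dvd_of_mem`). By unique factorization the divisor `h*` of `P` is `r(x) s(y)` with
`r ∣ x^l − 1` and `s ∣ y^m − 1`. Modulo `r` the polynomial `g` is a multiple of the monic
polynomial `y^m − 1`, but its `y`-degree is less than `m`, so `r ∣ g`; likewise `s ∣ g`. Since `r`
and `s` are relatively prime, `r s ∣ g`.
-/

open MvPolynomial

/-- The reciprocal polynomial of a bivariate polynomial `f` of `x`-degree `l₁` and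
`y`-degree `l₂`: if `f = Σ f_{i,j} x^i y^j` then `f* = Σ f_{i,j} x^{l₁-i} y^{l₂-j}`. -/
noncomputable def recip {F : Type*} [Field F] (f : MvPolynomial (Fin 2) F) :
    MvPolynomial (Fin 2) F :=
  ∑ d ∈ f.support,
    MvPolynomial.monomial
      (Finsupp.single (0 : Fin 2) (f.degreeOf 0 - d 0) +
        Finsupp.single (1 : Fin 2) (f.degreeOf 1 - d 1))
      (MvPolynomial.coeff d f)

/-- Evaluating `f*` at nonzero field elements: `f*(x,y) = x^{l₁} y^{l₂} f(x⁻¹, y⁻¹)`. -/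
theorem aeval_recip {F : Type*} [Field F] {L : Type*} [Field L] [Algebra F L]
    (v : Fin 2 → L) (hv : ∀ i, v i ≠ 0) (f : MvPolynomial (Fin 2) F) :
    aeval v (recip f) = v 0 ^ f.degreeOf 0 * v 1 ^ f.degreeOf 1 * aeval (fun i => (v i)⁻¹) f := by
  conv_rhs => arg 2; rw [f.as_sum]
  rw [recip, map_sum, map_sum, Finset.mul_sum]
  refine Finset.sum_congr rfl fun d hd => ?_
  have h0 := monomial_le_degreeOf 0 hd
  have h1 := monomial_le_degreeOf 1 hd
  rw [aeval_monomial, aeval_monomial, Finsupp.prod_fintype _ _ (by simp),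
    Finsupp.prod_fintype _ _ (by simp)]
  simp only [Fin.prod_univ_two]
  simp only [Finsupp.add_apply, Finsupp.single_apply, inv_pow]
  simp only [if_true, Fin.isValue, one_ne_zero, zero_ne_one, if_false, add_zero, zero_add]
  rw [pow_sub₀ _ (hv 0) h0, pow_sub₀ _ (hv 1) h1]
  ring

theorem degreeOf_X_pow_sub_one {F : Type*} [Field F] (i j : Fin 2) (n : ℕ) :
    (X i ^ n - 1 : MvPolynomial (Fin 2) F).degreeOf j = if i = j then n else 0 := by
  rcases Nat.eq_zero_or_pos n with rfl | hn
  · simp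
  apply le_antisymm
  · refine (degreeOf_sub_le _ _ _).trans ?_
    split_ifs with h
    · subst h
      rw [degreeOf_one, max_eq_left (Nat.zero_le _), X_pow_eq_monomial,
        degreeOf_monomial_eq _ _ one_ne_zero, Finsupp.single_eq_same]
    · rw [degreeOf_one, degreeOf_X_pow_of_ne _ (Ne.symm h), max_self]
  · split_ifs with h
    · subst h
      have : Finsupp.single i n ∈ (X i ^ n - 1 : MvPolynomial (Fin 2) F).support := by
        rw [mem_support_iff, coeff_sub, coeff_X_pow, coeff_one]
        have : (0 : Fin 2 →₀ ℕ) ≠ Finsupp.single i n := by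
          simpa [eq_comm] using hn.ne'
        simp [this]
      simpa using monomial_le_degreeOf i this
    · exact Nat.zero_le _

theorem X_pow_sub_one_ne_zero {F : Type*} [Field F] (i : Fin 2) {n : ℕ} (hn : 0 < n) :
    (X i ^ n - 1 : MvPolynomial (Fin 2) F) ≠ 0 := by
  intro h
  have := degreeOf_X_pow_sub_one (F := F) i i n
  rw [h] at this
  simp at this
  omega

/-- The reciprocals of complementary factors of `(x^l − 1)(y^m − 1)` are again complementary
factors, because taking reciprocals is multiplicative and fixes `(x^l − 1)(y^m − 1)`. -/
theorem recip_mul_recip {F : Type*} [Field F] {l m : ℕ} (hl : 0 < l) (hm : 0 < m)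
    {g h : MvPolynomial (Fin 2) F} (heq : (X 0 ^ l - 1) * (X 1 ^ m - 1) = g * h) :
    recip g * recip h = (X 0 ^ l - 1) * (X 1 ^ m - 1) := by
  have hx := X_pow_sub_one_ne_zero (F := F) 0 hl
  have hy := X_pow_sub_one_ne_zero (F := F) 1 hm
  have hgh : g * h ≠ 0 := heq ▸ mul_ne_zero hx hy
  have hg := left_ne_zero_of_mul hgh
  have hh := right_ne_zero_of_mul hgh
  have hdeg : ∀ i, g.degreeOf i + h.degreeOf i = (if 0 = i then l else 0) +
      if 1 = i then m else 0 := fun i => by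
    rw [← degreeOf_mul_eq hg hh, ← heq, degreeOf_mul_eq hx hy, degreeOf_X_pow_sub_one,
      degreeOf_X_pow_sub_one]
  have hd0 : g.degreeOf 0 + h.degreeOf 0 = l := by simpa using hdeg 0
  have hd1 : g.degreeOf 1 + h.degreeOf 1 = m := by simpa using hdeg 1
  -- Both sides are compared in the fraction field, where `x` and `y` are invertible.
  let L := FractionRing (MvPolynomial (Fin 2) F)
  let v : Fin 2 → L := fun i => algebraMap (MvPolynomial (Fin 2) F) L (X i)
  have hv : ∀ i, v i ≠ 0 := fun i =>
    (map_ne_zero_iff _ (IsFractionRing.injective (MvPolynomial (Fin 2) F) L)).2 (X_ne_zero i)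
  have hval : ∀ p, aeval v p = algebraMap (MvPolynomial (Fin 2) F) L p := fun p => by
    have : aeval v = IsScalarTower.toAlgHom F (MvPolynomial (Fin 2) F) L := by
      ext i
      simp [v]
    rw [this]
    rfl
  apply IsFractionRing.injective (MvPolynomial (Fin 2) F) L
  rw [← hval, ← hval, map_mul, aeval_recip v hv, aeval_recip v hv]
  have e := congrArg (aeval fun i => (v i)⁻¹) heq
  simp only [map_mul, map_sub, map_pow, aeval_X, map_one] at e ⊢
  have h0 := hv 0
  have h1 := hv 1
  calc _ = v 0 ^ (g.degreeOf 0 + h.degreeOf 0) * v 1 ^ (g.degreeOf 1 + h.degreeOf 1) *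
        ((aeval fun i => (v i)⁻¹) g * (aeval fun i => (v i)⁻¹) h) := by ring
    _ = _ := by
      rw [← e, hd0, hd1]
      have p : v 0 ^ l * (v 0)⁻¹ ^ l = 1 := by rw [← mul_pow, mul_inv_cancel₀ h0, one_pow]
      have q : v 1 ^ m * (v 1)⁻¹ ^ m = 1 := by rw [← mul_pow, mul_inv_cancel₀ h1, one_pow]
      linear_combination (v 1 ^ m * (v 1)⁻¹ ^ m - v 1 ^ m) * p + (1 - v 0 ^ l) * q

theorem exists_finSuccEquiv_eq_C {F : Type*} [Field F] {l : ℕ} (hl : 0 < l)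
    {r : MvPolynomial (Fin 2) F} (hr : r ∣ X 1 ^ l - 1) :
    ∃ r₀, finSuccEquiv F 1 r = Polynomial.C r₀ := by
  obtain ⟨k, hk⟩ := hr
  have hne := X_pow_sub_one_ne_zero (F := F) 1 hl
  have hd := degreeOf_X_pow_sub_one (F := F) 1 0 l
  rw [hk] at hne
  rw [hk, degreeOf_mul_eq (left_ne_zero_of_mul hne) (right_ne_zero_of_mul hne)] at hd
  refine ⟨_, Polynomial.eq_C_of_natDegree_eq_zero ?_⟩
  rw [natDegree_finSuccEquiv]
  simp at hd
  exact hd.1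

theorem finSuccEquiv_X_zero_pow_sub_one {F : Type*} [Field F] (m : ℕ) :
    finSuccEquiv F 1 (X 0 ^ m - 1) = Polynomial.X ^ m - 1 := by
  rw [map_sub, map_pow, finSuccEquiv_X_zero, map_one]

/-- A divisor `r` of `y^l − 1` is a polynomial in `y` alone. If `g = r k + (x^m − 1) b` has
`x`-degree less than `m`, then `g` is its own remainder on division by the monic polynomial `x^m − 1` over `F[y]`, hence
equals `r` times the remainder of `k`. -/
theorem dvd_of_eq_zero {F : Type*} [Field F] {l m : ℕ} (hl : 0 < l)
    {r g k b : MvPolynomial (Fin 2) F} (hr : r ∣ X 1 ^ l - 1) (hg : g.degreeOf 0 < m)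
    (e : g = r * k + (X 0 ^ m - 1) * b) : r ∣ g := by
  obtain ⟨r₀, h₀⟩ := exists_finSuccEquiv_eq_C hl hr
  have hm : m ≠ 0 := by omega
  have hmon : (Polynomial.X ^ m - 1 : Polynomial (MvPolynomial (Fin 1) F)).Monic := by
    simpa using Polynomial.monic_X_pow_sub_C (1 : MvPolynomial (Fin 1) F) hm
  have hself : finSuccEquiv F 1 g %ₘ (Polynomial.X ^ m - 1) = finSuccEquiv F 1 g := by
    rw [Polynomial.modByMonic_eq_self_iff hmon]
    apply Polynomial.degree_lt_degree
    rw [natDegree_finSuccEquiv]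
    rwa [← Polynomial.C_1, Polynomial.natDegree_X_pow_sub_C]
  have e' := congrArg (finSuccEquiv F 1) e
  rw [map_add, map_mul, map_mul, finSuccEquiv_X_zero_pow_sub_one, h₀] at e'
  rw [← map_dvd_iff (finSuccEquiv F 1), ← hself, h₀, e', Polynomial.add_modByMonic,
    (Polynomial.modByMonic_eq_zero_iff_dvd hmon).2 (dvd_mul_right _ _), add_zero, ← Polynomial.smul_eq_C_mul,
    Polynomial.smul_modByMonic, Polynomial.smul_eq_C_mul]
  exact dvd_mul_right _ _

/-- The variant of `dvd_of_eq_zero` with the two variables exchanged. -/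
theorem dvd_of_eq_one {F : Type*} [Field F] {l m : ℕ} (hl : 0 < l)
    {r g k b : MvPolynomial (Fin 2) F} (hr : r ∣ X 0 ^ l - 1) (hg : g.degreeOf 1 < m)
    (e : g = r * k + (X 1 ^ m - 1) * b) : r ∣ g := by
  let σ := renameEquiv F (Equiv.swap (0 : Fin 2) 1)
  have hσ : ∀ i, σ (X i) = X (Equiv.swap (0 : Fin 2) 1 i) := fun i => by simp [σ]
  rw [← map_dvd_iff σ]
  refine dvd_of_eq_zero (m := m) (k := σ k) (b := σ b) hl ?_ ?_ ?_
  · simpa [hσ] using map_dvd σ hr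
  · have := degreeOf_rename_of_injective (p := g) (Equiv.swap (0 : Fin 2) 1).injective 1
    rw [Equiv.swap_apply_right] at this
    simpa [σ, this] using hg
  · simpa [hσ] using congrArg σ e

theorem isRelPrime_X_pow_sub_one {F : Type*} [Field F] {l m : ℕ} (hl : 0 < l) (hm : 0 < m) :
    IsRelPrime (X 0 ^ l - 1 : MvPolynomial (Fin 2) F) (X 1 ^ m - 1) := by
  intro d hd hd'
  obtain ⟨d₀, h₀⟩ := exists_finSuccEquiv_eq_C hm hd'
  have hmon : (Polynomial.X ^ l - 1 : Polynomial (MvPolynomial (Fin 1) F)).Monic := by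
    simpa using Polynomial.monic_X_pow_sub_C (1 : MvPolynomial (Fin 1) F) hl.ne'
  have hdvd := map_dvd (finSuccEquiv F 1) hd
  rw [finSuccEquiv_X_zero_pow_sub_one, h₀] at hdvd
  -- A monic polynomial is primitive, so its only constant divisors are units.
  have hu : IsUnit (finSuccEquiv F 1 d) := by
    rw [h₀]
    exact (hmon.isPrimitive d₀ hdvd).map Polynomial.C
  simpa using hu

/-- A polynomial of small degrees lies in `⟨p, x^l − 1, y^m − 1⟩`, for `p` a divisor of
`(x^l − 1)(y^m − 1)`, only if `p` divides it. -/
theorem dvd_of_mem {F : Type*} [Field F] {l m : ℕ} (hl : 0 < l) (hm : 0 < m)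
    {p g k a b : MvPolynomial (Fin 2) F} (hp : p ∣ (X 0 ^ l - 1) * (X 1 ^ m - 1))
    (hal : g.degreeOf 0 < l) (hbm : g.degreeOf 1 < m)
    (e : g = p * k + (a * (X 0 ^ l - 1) + b * (X 1 ^ m - 1))) : p ∣ g := by
  -- `p = r(x) s(y)` by unique factorization; `r` and `s` divide `g` separately.
  obtain ⟨r, s, hr, hs, rfl⟩ := exists_dvd_and_dvd_of_dvd_mul hp
  have hrs : IsRelPrime r s :=
    ((isRelPrime_X_pow_sub_one hl hm).of_dvd_left hr).of_dvd_right hs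
  obtain ⟨r', hr'⟩ := id hr
  obtain ⟨s', hs'⟩ := id hs
  refine hrs.mul_dvd ?_ ?_
  · refine dvd_of_eq_one (k := s * k + a * r') (b := b) hl hr hbm ?_
    rw [e, hr']
    ring
  · refine dvd_of_eq_zero (k := r * k + b * s') (b := a) hm hs hal ?_
    rw [e, hs']
    ring

/-- Suppose `(x^l − 1)(y^m − 1) = g·h` in `F[x,y]`, where `g` has
`x`-degree `a` and `y`-degree `b` with `0 < a < l` and `0 < b < m`.  Let `C` be the
ideal of `𝔎 = F[x,y]/⟨x^l−1, y^m−1⟩` generated by the image of `g` and `C*` the ideal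
generated by the image of `h*`.  Then `C ⊆ C*` iff `(x^l − 1)(y^m − 1)` divides `g·g*`. -/
theorem stmt_7 (F : Type*) [Field F] [Fintype F] (l m : ℕ) (hl : 0 < l) (hm : 0 < m)
    (g h : MvPolynomial (Fin 2) F)
    (heq : (X 0 ^ l - 1) * (X 1 ^ m - 1) = g * h)
    (ha0 : 0 < g.degreeOf 0) (hal : g.degreeOf 0 < l)
    (hb0 : 0 < g.degreeOf 1) (hbm : g.degreeOf 1 < m)
    (K : Ideal (MvPolynomial (Fin 2) F))
    (hK : K = Ideal.span {X 0 ^ l - 1, X 1 ^ m - 1}) :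
    Ideal.span {Ideal.Quotient.mk K g} ≤ Ideal.span {Ideal.Quotient.mk K (recip h)} ↔
      (X (0 : Fin 2) ^ l - 1) * (X 1 ^ m - 1) ∣ g * recip g := by
  have hP := recip_mul_recip hl hm heq
  have hg' : recip g ≠ 0 := left_ne_zero_of_mul (b := recip h) <| hP ▸
    mul_ne_zero (X_pow_sub_one_ne_zero 0 hl) (X_pow_sub_one_ne_zero 1 hm)
  rw [Ideal.span_singleton_le_span_singleton]
  -- Cancelling `g*` from `(x^l − 1)(y^m − 1) = g* h*` turns the right side into `h* ∣ g`.
  rw [← hP, mul_comm g, mul_dvd_mul_iff_left hg']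
  refine ⟨?_, map_dvd _⟩
  rintro ⟨k, hk⟩
  obtain ⟨k, rfl⟩ := Ideal.Quotient.mk_surjective k
  rw [← map_mul, Ideal.Quotient.eq, hK, Ideal.mem_span_pair] at hk
  obtain ⟨a, b, hab⟩ := hk
  refine dvd_of_mem (k := k) (a := a) (b := b) hl hm ⟨recip g, ?_⟩ hal hbm ?_
  · rw [← hP, mul_comm]
  · rw [hab]
    ring
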